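/- arXiv:math/0308257 — 2 statements merged into one kernel-verified Lean document; each statement's English description precedes it below -/
import Mathlib

section
/- Let S be a unital inverse semigroup and let φ : S → ℂ be a restricted positive definite function of finite support. Define ρ̃_r(φ) on functions ξ : S → ℂ by (ρ̃_r(φ)ξ)(y) = ∑_{z : z z⋆ = y⋆ y} φ(z) · ξ(y z). Then for every finitely supported ξ : S → ℂ, the inner product ⟨ρ̃_r(φ)ξ, ξ⟩ = ∑_{y ∈ S} (ρ̃_r(φ)ξ)(y) · conj(ξ(y)) is a nonnegative real number. (Lemma 2.4) -/
open scoped Classical ComplexOrder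

noncomputable section

/-- A unital inverse semigroup: a monoid with an involution `star` satisfying
`star (x*y) = star y * star x`, `star (star x) = x`, `x * star x * x = x`,
`star x * x * star x = star x`, in which all idempotents commute. -/
class InverseSemigroup (S : Type*) extends Monoid S, StarMul S where
  mul_star_mul_self : ∀ x : S, x * star x * x = x
  star_mul_self_star : ∀ x : S, star x * x * star x = star x
  idem_comm : ∀ e f : S, e * e = e → f * f = f → e * f = f * e

variable {S : Type*} [InverseSemigroup S]

/-- The restricted left translate `λ_r(x)u`. -/
def restrictedTranslate (x : S) (u : S → ℂ) : S → ℂ := fun y =>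
  if x * star x = y * star y then u (star x * y) else 0

/-- `u` is restricted positive definite. -/
def IsRestrictedPosDef (u : S → ℂ) : Prop :=
  (∃ M : ℝ, ∀ x, ‖u x‖ ≤ M) ∧
  ∀ (n : ℕ) (x : Fin n → S) (c : Fin n → ℂ),
    0 ≤ ∑ i, ∑ j, (starRingEnd ℂ) (c i) * c j * restrictedTranslate (x i) u (x j)

/-- `u` is extendible restricted positive definite. -/
def IsExtendibleRPD (u : S → ℂ) : Prop :=
  IsRestrictedPosDef u ∧ (∀ x, u (star x) = (starRingEnd ℂ) (u x)) ∧
  ∃ C : ℝ, 0 < C ∧ ∀ (n : ℕ) (x : Fin n → S) (c : Fin n → ℂ),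
    ((‖∑ i, c i * u (x i)‖ ^ 2 : ℝ) : ℂ) ≤
      (C : ℂ) * ∑ i, ∑ j, (starRingEnd ℂ) (c i) * c j * restrictedTranslate (x i) u (x j)

/-- The restricted convolution `ξ • η`. -/
def rconv (ξ η : S → ℂ) : S → ℂ := fun x =>
  ∑' y, if star x * x = y * star y then ξ (x * y) * η (star y) else 0

/-- `ξ̃(x) = conj (ξ (star x))`. -/
def tilde (ξ : S → ℂ) : S → ℂ := fun x => (starRingEnd ℂ) (ξ (star x))

/-- Multiplication of the restricted semigroup `S_r = Option S`. -/
def rmul : Option S → Option S → Option S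
  | some x, some y => if star x * x = y * star y then some (x * y) else none
  | _, _ => none

/-- Involution of the restricted semigroup `S_r = Option S`. -/
def rstar : Option S → Option S
  | some x => some (star x)
  | none => none


/-- The operator `ρ̃_r(φ)`, `(ρ̃_r(φ)ξ)(y) = ∑_{z : z z⋆ = y⋆ y} φ(z) ξ(y z)`. -/
def rhoTilde (φ ξ : S → ℂ) : S → ℂ := fun y =>
  ∑' z : S, if z * star z = star y * y then φ z * ξ (y * z) else 0

/-!
Left multiplication by `y` is a bijection from `{z | z z⋆ = y⋆ y}` onto `{w | w w⋆ = y y⋆}`, with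
inverse left multiplication by `y⋆`. Substituting `w = y z` therefore turns `ρ̃_r(φ)` into the
integral operator with kernel `(y, w) ↦ (λ_r(y)φ)(w)`, whose quadratic form is the one that
restricted positive definiteness of `φ` makes nonnegative. The infinite sums are finite, hence free
of junk values, as soon as `ξ` has finite support: injectivity of `z ↦ y z` leaves only finitely
many nonzero terms `φ(z) ξ(y z)`.
-/

namespace InverseSemigroup

theorem mul_star_mul_cancel_left {y w : S} (h : y * star y = w * star w) :
    y * (star y * w) = w := by
  rw [← mul_assoc, h, mul_star_mul_self]

theorem star_mul_mul_cancel_left {y z : S} (h : z * star z = star y * y) :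
    star y * (y * z) = z := by
  rw [← mul_assoc, ← h, mul_star_mul_self]

theorem mul_mul_star_mul {y z : S} (h : z * star z = star y * y) :
    y * z * star (y * z) = y * star y := by
  rw [star_mul, mul_assoc, ← mul_assoc z, h, star_mul_self_star]

theorem star_mul_mul_star_star_mul {y w : S} (h : y * star y = w * star w) :
    star y * w * star (star y * w) = star y * y := by
  rw [mul_mul_star_mul (by rw [star_star, h]), star_star]

/-- Left translation by `y` in the groupoid underlying an inverse semigroup, where `x` is an arrow
from `x⋆ x` to `x x⋆` and products are restricted to composable pairs. The range conditions are
oriented as in `rhoTilde` and `restrictedTranslate`. -/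
def leftTranslation (y : S) :
    {z : S | z * star z = star y * y} ≃ {w : S | y * star y = w * star w} where
  toFun z := ⟨y * z, (mul_mul_star_mul z.2).symm⟩
  invFun w := ⟨star y * w, star_mul_mul_star_star_mul w.2⟩
  left_inv z := Subtype.ext (star_mul_mul_cancel_left z.2)
  right_inv w := Subtype.ext (mul_star_mul_cancel_left w.2)

end InverseSemigroup

open InverseSemigroup in
theorem rhoTilde_eq_tsum_restrictedTranslate (φ ξ : S → ℂ) (y : S) :
    rhoTilde φ ξ y = ∑' w, restrictedTranslate y φ w * ξ w :=
  calc rhoTilde φ ξ y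
      = ∑' z : {z : S | z * star z = star y * y}, φ z * ξ (y * z) :=
        (tsum_subtype _ fun z => φ z * ξ (y * z)).symm
    _ = ∑' z : {z : S | z * star z = star y * y},
          φ (star y * leftTranslation y z) * ξ (leftTranslation y z) :=
        tsum_congr fun z => by
          simp only [leftTranslation, Equiv.coe_fn_mk, star_mul_mul_cancel_left z.2]
    _ = ∑' w : {w : S | y * star y = w * star w}, φ (star y * w) * ξ w :=
        (leftTranslation y).tsum_eq fun w => φ (star y * w) * ξ w
    _ = ∑' w, restrictedTranslate y φ w * ξ w := by
        rw [tsum_subtype _ fun w => φ (star y * w) * ξ w]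
        simp only [Set.indicator_apply, Set.mem_ofPred_eq, restrictedTranslate, ite_mul, zero_mul]

theorem tsum_rhoTilde_mul_conj_eq_sum (φ : S → ℂ) {ξ : S → ℂ} {s : Finset S}
    (hs : Function.support ξ ⊆ s) :
    ∑' y, rhoTilde φ ξ y * (starRingEnd ℂ) (ξ y) =
      ∑ x ∈ s, ∑ y ∈ s, (starRingEnd ℂ) (ξ x) * ξ y * restrictedTranslate x φ y := by
  have eq_zero_of_notMem {y : S} (hy : y ∉ s) : ξ y = 0 :=
    Function.notMem_support.mp fun h => hy (hs h)
  rw [tsum_eq_sum fun y hy => by rw [eq_zero_of_notMem hy, map_zero, mul_zero]]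
  refine Finset.sum_congr rfl fun x _ => ?_
  rw [rhoTilde_eq_tsum_restrictedTranslate,
    tsum_eq_sum fun y hy => by rw [eq_zero_of_notMem hy, mul_zero], Finset.sum_mul]
  exact Finset.sum_congr rfl fun y _ => by ring

theorem sum_finset_nonneg_of_sum_fin_nonneg {α R : Type*} [CommSemiring R] [StarRing R] [LE R]
    (K : α → α → R)
    (hK : ∀ (n : ℕ) (x : Fin n → α) (c : Fin n → R),
      0 ≤ ∑ i, ∑ j, (starRingEnd R) (c i) * c j * K (x i) (x j))
    (s : Finset α) (c : α → R) :
    0 ≤ ∑ x ∈ s, ∑ y ∈ s, (starRingEnd R) (c x) * c y * K x y := by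
  have reindex (f : α → R) : ∑ i, f (s.equivFin.symm i) = ∑ x ∈ s, f x := by
    rw [Equiv.sum_comp s.equivFin.symm fun x : s => f x, Finset.sum_coe_sort]
  simp only [← reindex]
  exact hK s.card (fun i => s.equivFin.symm i) fun i => c (s.equivFin.symm i)

theorem rhoTilde_posDef_general {φ ξ : S → ℂ}
    (hφ : ∀ (n : ℕ) (x : Fin n → S) (c : Fin n → ℂ),
      0 ≤ ∑ i, ∑ j, (starRingEnd ℂ) (c i) * c j * restrictedTranslate (x i) φ (x j))
    (hξ : (Function.support ξ).Finite) :
    0 ≤ ∑' y, rhoTilde φ ξ y * (starRingEnd ℂ) (ξ y) := by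
  rw [tsum_rhoTilde_mul_conj_eq_sum φ hξ.coe_toFinset.superset]
  exact sum_finset_nonneg_of_sum_fin_nonneg (fun x => restrictedTranslate x φ) hφ _ ξ

/-- Lemma 2.4: if `φ` is restricted positive definite of finite support, then
`⟨ρ̃_r(φ)ξ, ξ⟩ ≥ 0` for every finitely supported `ξ`. -/
theorem rhoTilde_posDef {S : Type*} [InverseSemigroup S] (φ : S → ℂ)
    (hφ : IsRestrictedPosDef φ) (hφf : (Function.support φ).Finite)
    (ξ : S → ℂ) (hξ : (Function.support ξ).Finite) :
    0 ≤ ∑' y : S, rhoTilde φ ξ y * (starRingEnd ℂ) (ξ y) :=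
  rhoTilde_posDef_general hφ.2 hξ
end
end

section
/- Let S be a unital inverse semigroup. For x ∈ S define λ_r(x) on functions ξ : S → ℂ by (λ_r(x)ξ)(y) = ξ(x⋆ y) if x x⋆ = y y⋆ and 0 otherwise. Then λ_r(x) maps ℓ²(S) into ℓ²(S) with ‖λ_r(x)ξ‖₂ ≤ ‖ξ‖₂, the adjoint of λ_r(x) on ℓ²(S) is λ_r(x⋆), and for all x, y ∈ S: λ_r(x) ∘ λ_r(y) = λ_r(x y) if x⋆ x = y y⋆, while λ_r(x) ∘ λ_r(y) = 0 otherwise. (The restricted left regular representation λ_r ∈ Σ_r(S)) -/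
open scoped Classical ComplexOrder

noncomputable section

variable {S : Type*} [InverseSemigroup S]

/-! On the `ℛ`-class `{y | x x⋆ = y y⋆}` of `x`, the map `y ↦ x⋆ y` is a bijection onto the
`ℛ`-class of `x⋆`, with inverse `z ↦ x z`. Outside this class `λ_r(x)ξ` vanishes, and inside it
is `ξ` transported along the bijection, so `λ_r(x)` cannot increase an `ℓᵖ` norm, and reindexing the
pairing `∑ (λ_r(x)ξ)(y) conj (η y)` along `y = x z` moves `λ_r(x)` to `λ_r(x⋆)` on the other side.
If `y` lies in the `ℛ`-class of `x⋆`, then `x y` lies in that of `x`, which gives the product rule;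
otherwise `y` and `x⋆` have disjoint `ℛ`-classes, and the product of the operators is `0`. -/

open scoped ENNReal

section IndicatorComp

variable {α β M E : Type*} {f : α → β} {s : Set α}

theorem mapsTo_support_indicator_comp [Zero M] (ξ : β → M) :
    Set.MapsTo f {a | s.indicator (ξ ∘ f) a ≠ 0} {b | ξ b ≠ 0} := fun _ ha =>
  (Set.indicator_apply_ne_zero.mp ha).2

theorem injOn_support_indicator_comp [Zero M] (hf : s.InjOn f) (ξ : β → M) :
    Set.InjOn f {a | s.indicator (ξ ∘ f) a ≠ 0} :=
  hf.mono fun _ => Set.mem_of_indicator_ne_zero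

theorem norm_indicator_comp_rpow [SeminormedAddCommGroup E] (ξ : β → E) {r : ℝ} (hr : r ≠ 0) :
    (fun a => ‖s.indicator (ξ ∘ f) a‖ ^ r) = s.indicator fun a => ‖ξ (f a)‖ ^ r := by
  ext a
  by_cases ha : a ∈ s <;> simp [ha, hr]

variable [NormedAddCommGroup E] {p : ℝ≥0∞}

theorem memℓp_indicator_comp (hf : s.InjOn f) {ξ : β → E} (hξ : Memℓp ξ p) :
    Memℓp (s.indicator (ξ ∘ f)) p := by
  rcases p.trichotomy with rfl | rfl | hp
  · exact memℓp_zero <| .of_finite_image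
      (hξ.finite_dsupport.subset (mapsTo_support_indicator_comp ξ).image_subset)
      (injOn_support_indicator_comp hf ξ)
  · obtain ⟨C, hC⟩ := memℓp_infty_iff.mp hξ
    refine memℓp_infty ⟨C, Set.forall_mem_range.mpr fun a => ?_⟩
    exact (norm_indicator_le_norm_self _ a).trans (hC ⟨f a, rfl⟩)
  · rw [memℓp_gen_iff hp] at hξ ⊢
    rw [norm_indicator_comp_rpow ξ hp.ne', ← summable_subtype_iff_indicator]
    exact hξ.comp_injective hf.injective

theorem lp_norm_indicator_comp_le (hf : s.InjOn f) (ξ : lp (fun _ : β => E) p) :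
    ‖(⟨s.indicator (ξ ∘ f), memℓp_indicator_comp hf (lp.memℓp ξ)⟩ : lp (fun _ : α => E) p)‖ ≤
      ‖ξ‖ := by
  rcases p.trichotomy with rfl | rfl | hp
  · rw [lp.norm_eq_card_dsupport, lp.norm_eq_card_dsupport]
    exact_mod_cast Finset.card_le_card_of_injOn f
      (by simpa using mapsTo_support_indicator_comp (s := s) (f := f) ξ)
      (by simpa using injOn_support_indicator_comp hf ξ)
  · exact lp.norm_le_of_forall_le (norm_nonneg ξ) fun a =>
      (norm_indicator_le_norm_self _ a).trans (lp.norm_apply_le_norm ENNReal.top_ne_zero ξ (f a))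
  · rw [lp.norm_eq_tsum_rpow hp, lp.norm_eq_tsum_rpow hp]
    gcongr
    rw [norm_indicator_comp_rpow ξ hp.ne', ← tsum_subtype]
    exact tsum_comp_le_tsum_of_inj ((memℓp_gen_iff hp).mp (lp.memℓp ξ)) (fun _ => by positivity)
      hf.injective

end IndicatorComp

namespace InverseSemigroup

/-- The `ℛ`-class of `x` for Green's relations: the elements `y` with the same range
projection as `x`. Every `restrictedTranslate x ξ` is supported there. -/
def rClass (x : S) : Set S :=
  {y | x * star x = y * star y}

theorem mem_rClass_iff {x y : S} : y ∈ rClass x ↔ x * star x = y * star y :=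
  Iff.rfl

theorem mem_rClass_star_iff {x y : S} : y ∈ rClass (star x) ↔ star x * x = y * star y := by
  rw [mem_rClass_iff, star_star]

theorem mul_star_mul_of_mem_rClass {x y : S} (h : y ∈ rClass x) : x * (star x * y) = y := by
  rw [← mul_assoc, mem_rClass_iff.mp h, mul_star_mul_self]

theorem mul_mem_rClass {x y : S} (h : star x * x = y * star y) : x * y ∈ rClass x := by
  rw [mem_rClass_iff, star_mul, mul_assoc, ← mul_assoc y, ← h, ← mul_assoc, ← mul_assoc,
    mul_star_mul_self]

theorem rClass_mul_of_eq {x y : S} (h : star x * x = y * star y) : rClass (x * y) = rClass x := by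
  ext z
  rw [mem_rClass_iff, mem_rClass_iff, ← mem_rClass_iff.mp (mul_mem_rClass h)]

theorem star_mul_mem_rClass {x y : S} (h : y ∈ rClass x) : star x * y ∈ rClass (star x) :=
  mul_mem_rClass (by rwa [star_star])

theorem injOn_star_mul (x : S) : (rClass x).InjOn (star x * ·) :=
  Set.LeftInvOn.injOn (f₁' := (x * ·)) fun _ => mul_star_mul_of_mem_rClass

/-- Left multiplication by `star x`, as a bijection between the `ℛ`-classes of `x` and `star x`. -/
def rClassEquivStar (x : S) : rClass x ≃ rClass (star x) where
  toFun y := ⟨star x * y, star_mul_mem_rClass y.2⟩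
  invFun z := ⟨x * z, mul_mem_rClass (mem_rClass_star_iff.mp z.2)⟩
  left_inv y := Subtype.ext (mul_star_mul_of_mem_rClass y.2)
  right_inv z := Subtype.ext (by simpa using mul_star_mul_of_mem_rClass z.2)

end InverseSemigroup

namespace restrictedTranslate

open InverseSemigroup

theorem eq_indicator (x : S) (ξ : S → ℂ) :
    restrictedTranslate x ξ = (rClass x).indicator (ξ ∘ (star x * ·)) :=
  rfl

theorem memℓp {p : ℝ≥0∞} (x : S) {ξ : S → ℂ} (hξ : Memℓp ξ p) :
    Memℓp (restrictedTranslate x ξ) p :=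
  memℓp_indicator_comp (injOn_star_mul x) hξ

theorem lp_norm_le {p : ℝ≥0∞} (x : S) (ξ : lp (fun _ : S => ℂ) p) :
    ‖(⟨restrictedTranslate x ξ, memℓp x (lp.memℓp ξ)⟩ : lp (fun _ : S => ℂ) p)‖ ≤ ‖ξ‖ :=
  lp_norm_indicator_comp_le (injOn_star_mul x) ξ

theorem hasSum_mul_conj_iff (x : S) (ξ η : S → ℂ) (a : ℂ) :
    HasSum (fun y => restrictedTranslate x ξ y * starRingEnd ℂ (η y)) a ↔
      HasSum (fun y => ξ y * starRingEnd ℂ (restrictedTranslate (star x) η y)) a := by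
  have left_eq : (fun y => restrictedTranslate x ξ y * starRingEnd ℂ (η y)) =
      (rClass x).indicator fun y => ξ (star x * y) * starRingEnd ℂ (η y) := by
    ext y
    by_cases hy : y ∈ rClass x <;> simp [eq_indicator, hy]
  have right_eq : (fun y => ξ y * starRingEnd ℂ (restrictedTranslate (star x) η y)) =
      (rClass (star x)).indicator fun z => ξ z * starRingEnd ℂ (η (x * z)) := by
    ext z
    by_cases hz : z ∈ rClass (star x) <;> simp [eq_indicator, hz]
  rw [left_eq, right_eq, ← hasSum_subtype_iff_indicator, ← hasSum_subtype_iff_indicator,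
    ← (rClassEquivStar x).hasSum_iff]
  have mul_star_mul (y : rClass x) : x * (star x * y) = y := mul_star_mul_of_mem_rClass y.2
  simp [Function.comp_def, rClassEquivStar, mul_star_mul]

theorem comp_of_eq {x y : S} (h : star x * x = y * star y) (ξ : S → ℂ) :
    restrictedTranslate x (restrictedTranslate y ξ) = restrictedTranslate (x * y) ξ := by
  ext z
  by_cases hz : z ∈ rClass x
  · have hy : star x * z ∈ rClass y :=
      h.symm.trans (mem_rClass_star_iff.mp (star_mul_mem_rClass hz))
    simp [eq_indicator, rClass_mul_of_eq h, hz, hy, mul_assoc]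
  · simp [eq_indicator, rClass_mul_of_eq h, hz]

theorem comp_of_ne {x y : S} (h : star x * x ≠ y * star y) (ξ : S → ℂ) :
    restrictedTranslate x (restrictedTranslate y ξ) = 0 := by
  ext z
  by_cases hz : z ∈ rClass x
  · have hy : star x * z ∉ rClass y := fun hy =>
      h ((mem_rClass_star_iff.mp (star_mul_mem_rClass hz)).trans (mem_rClass_iff.mp hy).symm)
    simp [eq_indicator, hz, hy]
  · simp [eq_indicator, hz]

end restrictedTranslate

theorem restrictedLeftRegular_is_restricted_rep_general {S : Type*} [InverseSemigroup S] :
    (∀ (p : ℝ≥0∞) (x : S) (ξ : lp (fun _ : S => ℂ) p),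
        ∃ h : Memℓp (restrictedTranslate x ξ) p,
          ‖(⟨restrictedTranslate x ξ, h⟩ : lp (fun _ : S => ℂ) p)‖ ≤ ‖ξ‖) ∧
    (∀ (x : S) (ξ η : S → ℂ) (a : ℂ),
        HasSum (fun y => restrictedTranslate x ξ y * starRingEnd ℂ (η y)) a ↔
          HasSum (fun y => ξ y * starRingEnd ℂ (restrictedTranslate (star x) η y)) a) ∧
    (∀ x y : S,
        (star x * x = y * star y → ∀ ξ : S → ℂ,
          restrictedTranslate x (restrictedTranslate y ξ) = restrictedTranslate (x * y) ξ) ∧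
        (star x * x ≠ y * star y → ∀ ξ : S → ℂ,
          restrictedTranslate x (restrictedTranslate y ξ) = 0)) :=
  ⟨fun _ x ξ => ⟨restrictedTranslate.memℓp x (lp.memℓp ξ), restrictedTranslate.lp_norm_le x ξ⟩,
    restrictedTranslate.hasSum_mul_conj_iff,
    fun _ _ => ⟨restrictedTranslate.comp_of_eq, restrictedTranslate.comp_of_ne⟩⟩

/-- The restricted left regular representation `λ_r` is a restricted representation of `S`
on `ℓ²(S)` with `‖λ_r(x)‖ ≤ 1`: each `λ_r(x)` maps `ℓ²(S)` into `ℓ²(S)` contractively,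
its adjoint is `λ_r(x⋆)`, and `λ_r(x)λ_r(y) = λ_r(xy)` if `x⋆ x = y y⋆`, `= 0` otherwise. -/
theorem restrictedLeftRegular_is_restricted_rep {S : Type*} [InverseSemigroup S] :
    (∀ (x : S) (ξ : S → ℂ), Memℓp ξ 2 →
        Memℓp (restrictedTranslate x ξ) 2 ∧
        Real.sqrt (∑' y : S, ‖restrictedTranslate x ξ y‖ ^ 2)
          ≤ Real.sqrt (∑' y : S, ‖ξ y‖ ^ 2)) ∧
    (∀ (x : S) (ξ η : S → ℂ), Memℓp ξ 2 → Memℓp η 2 →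
        ∑' y : S, restrictedTranslate x ξ y * (starRingEnd ℂ) (η y)
          = ∑' y : S, ξ y * (starRingEnd ℂ) (restrictedTranslate (star x) η y)) ∧
    (∀ x y : S,
        (star x * x = y * star y →
          ∀ ξ : S → ℂ, Memℓp ξ 2 →
            restrictedTranslate x (restrictedTranslate y ξ) = restrictedTranslate (x * y) ξ) ∧
        (star x * x ≠ y * star y →
          ∀ ξ : S → ℂ, Memℓp ξ 2 →
            restrictedTranslate x (restrictedTranslate y ξ) = 0)) := by
  obtain ⟨contract, adjoint, mul⟩ := restrictedLeftRegular_is_restricted_rep_general (S := S)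
  exact ⟨fun x ξ hξ => by
      simpa [lp.norm_eq_tsum_rpow, Real.sqrt_eq_rpow] using contract 2 x ⟨ξ, hξ⟩,
    fun x ξ η _ _ => tsum_eq_tsum_of_hasSum_iff_hasSum (adjoint x ξ η _),
    fun x y => ⟨fun h ξ _ => (mul x y).1 h ξ, fun h ξ _ => (mul x y).2 h ξ⟩⟩
end
end
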